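/- If K ⊩ τ :: k (the monotype τ has kind k under the kinding environment K), and the kinded substitution (K₁, S) respects K, then K₁ ⊩ S(τ) :: S(k). -/

import Mathlib

/-- EVL monotypes: type variables, base types, arrow types, record types. -/
inductive MonoTy : Type where
  | tvar : Nat → MonoTy
  | base : Nat → MonoTy
  | arrow : MonoTy → MonoTy → MonoTy
  | record : List (String × MonoTy) → MonoTy

/-- EVL kinds: the universal kind U and record kinds. -/
inductive Kind : Type where
  | univ : Kind
  | recK : List (String × MonoTy) → Kind

/-- A substitution: a (partial) map from type variables to monotypes. -/
abbrev Subst := Nat → Option MonoTy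

/-- A kinding environment: a (partial) map from type variables to kinds. -/
abbrev KEnv := Nat → Option Kind

def substVar (S : Subst) (a : Nat) : MonoTy := (S a).getD (.tvar a)

/-- Apply a substitution to a monotype. -/
def applyMono (S : Subst) : MonoTy → MonoTy
  | .tvar a => substVar S a
  | .base b => .base b
  | .arrow t u => .arrow (applyMono S t) (applyMono S u)
  | .record fs => .record (fs.attach.map fun p => (p.1.1, applyMono S p.1.2))
termination_by t => sizeOf t
decreasing_by
  · simp; try omega
  · simp; try omega
  · have h := List.sizeOf_lt_of_mem p.2
    have h2 : sizeOf (p.1).2 < sizeOf p.1 := by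
      obtain ⟨⟨a, b⟩, hq⟩ := p
      simp <;> omega
    have h3 : sizeOf (MonoTy.record fs) = 1 + sizeOf fs := by simp
    omega

/-- Apply a substitution to a kind. -/
def applyKind (S : Subst) : Kind → Kind
  | .univ => .univ
  | .recK fs => .recK (fs.map fun p => (p.1, applyMono S p.2))

/-- Free type variables of a monotype (as a membership predicate). -/
inductive MemFTV : Nat → MonoTy → Prop where
  | tvar (a : Nat) : MemFTV a (.tvar a)
  | arrowL : MemFTV a t → MemFTV a (.arrow t u)
  | arrowR : MemFTV a u → MemFTV a (.arrow t u)
  | record : (l, t) ∈ fs → MemFTV a t → MemFTV a (.record fs)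

/-- Free type variables of a kind. -/
def MemFTVKind (a : Nat) : Kind → Prop
  | .univ => False
  | .recK fs => ∃ p ∈ fs, MemFTV a p.2

/-- A monotype is well-formed under `K` if all its free type variables are in `dom K`. -/
def WFMono (K : KEnv) (t : MonoTy) : Prop := ∀ a, MemFTV a t → (K a).isSome

/-- A kind is well-formed under `K`. -/
def WFKind (K : KEnv) (k : Kind) : Prop := ∀ a, MemFTVKind a k → (K a).isSome

/-- The kinding judgement `K ⊩ τ :: k`. -/
inductive HasKind (K : KEnv) : MonoTy → Kind → Prop where
  | univ : WFMono K t → HasKind K t .univ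
  | tvar : K a = some (.recK fs') → (∀ p ∈ fs, p ∈ fs') → HasKind K (.tvar a) (.recK fs)
  | record : WFMono K (.record fs') → (∀ p ∈ fs, p ∈ fs') →
      HasKind K (.record fs') (.recK fs)

/-- `S` is well-formed under `K`: `S α` is well-formed under `K` for every `α ∈ dom S`
(so `(K, S)` is a kinded substitution). -/
def WFSubst (K : KEnv) (S : Subst) : Prop := ∀ a t, S a = some t → WFMono K t

/-- The kinded substitution `(K₁, S)` respects `K₂`. -/
def Respects (K1 : KEnv) (S : Subst) (K2 : KEnv) : Prop :=
  WFSubst K1 S ∧ ∀ a k, K2 a = some k → HasKind K1 (substVar S a) (applyKind S k)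

/-- EVL type schemes `∀α₁::k₁ ⋯ ∀αₙ::kₙ.τ`, given by the quantifier prefix and the body. -/
structure Ty : Type where
  binds : List (Nat × Kind)
  body : MonoTy

/-- Free type variables of a type scheme. -/
def MemFTVTy (a : Nat) (σ : Ty) : Prop :=
  (MemFTV a σ.body ∨ ∃ p ∈ σ.binds, MemFTVKind a p.2) ∧ a ∉ σ.binds.map Prod.fst

/-- Restrict a substitution away from a list of (bound) variables. -/
def restrictSubst (S : Subst) (bs : List Nat) : Subst :=
  fun a => if a ∈ bs then none else S a

/-- Apply a substitution to a type scheme (bound variables are not affected,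
following the bound type variable convention). -/
def applyTy (S : Subst) (σ : Ty) : Ty :=
  let S' := restrictSubst S (σ.binds.map Prod.fst)
  ⟨σ.binds.map (fun p => (p.1, applyKind S' p.2)), applyMono S' σ.body⟩

/-- Well-formedness of a type scheme under a kinding environment. -/
def WFTy (K : KEnv) (σ : Ty) : Prop := ∀ a, MemFTVTy a σ → (K a).isSome

theorem applyMono_record (S : Subst) (fs : List (String × MonoTy)) :
    applyMono S (.record fs) = .record (fs.map fun p => (p.1, applyMono S p.2)) := by
  rw [applyMono]
  congr 1
  conv_rhs => rw [← List.attach_map_subtype_val fs, List.map_map]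
  rfl

theorem memFTV_applyMono (S : Subst) (b : Nat) (u : MonoTy) (h : MemFTV b u) :
    ∀ t, applyMono S t = u → ∃ a, MemFTV a t ∧ MemFTV b (substVar S a) := by
  induction h with
  | tvar a =>
    intro t ht
    cases t with
    | tvar c =>
      rw [applyMono] at ht
      exact ⟨c, .tvar c, ht ▸ .tvar a⟩
    | base c => simp [applyMono] at ht
    | arrow c d => simp [applyMono] at ht
    | record fs => simp [applyMono] at ht
  | arrowL h ih =>
    intro t ht
    cases t with
    | tvar c =>
      rw [applyMono] at ht
      exact ⟨c, .tvar c, ht ▸ .arrowL h⟩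
    | base c => simp [applyMono] at ht
    | arrow c d =>
      rw [applyMono] at ht
      injection ht with h1 h2
      obtain ⟨a, ha, hb⟩ := ih c h1
      exact ⟨a, .arrowL ha, hb⟩
    | record fs => simp [applyMono] at ht
  | arrowR h ih =>
    intro t ht
    cases t with
    | tvar c =>
      rw [applyMono] at ht
      exact ⟨c, .tvar c, ht ▸ .arrowR h⟩
    | base c => simp [applyMono] at ht
    | arrow c d =>
      rw [applyMono] at ht
      injection ht with h1 h2
      obtain ⟨a, ha, hb⟩ := ih d h2
      exact ⟨a, .arrowR ha, hb⟩
    | record fs => simp [applyMono] at ht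
  | record hm h ih =>
    intro t ht
    cases t with
    | tvar c =>
      rw [applyMono] at ht
      exact ⟨c, .tvar c, ht ▸ .record hm h⟩
    | base c => simp [applyMono] at ht
    | arrow c d => simp [applyMono] at ht
    | record fs =>
      rw [applyMono_record] at ht
      injection ht with h1
      rw [← h1] at hm
      obtain ⟨⟨l, t⟩, hp, he⟩ := List.mem_map.1 hm
      obtain ⟨a, ha, hb⟩ := ih t (Prod.mk.inj he).2
      exact ⟨a, .record hp ha, hb⟩

theorem HasKind.wf {K : KEnv} {t : MonoTy} {k : Kind} (h : HasKind K t k) : WFMono K t := by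
  cases h with
  | univ h => exact h
  | tvar h _ =>
    intro a ha
    cases ha
    simp [h]
  | record h _ => exact h

theorem HasKind.weaken {K : KEnv} {t : MonoTy} {fs fs' : List (String × MonoTy)}
    (h : HasKind K t (.recK fs')) (hs : ∀ p ∈ fs, p ∈ fs') : HasKind K t (.recK fs) := by
  cases h with
  | tvar h h' => exact .tvar h fun p hp => h' p (hs p hp)
  | record h h' => exact .record h fun p hp => h' p (hs p hp)

theorem WFMono.subst {K K₁ : KEnv} {S : Subst} {t : MonoTy} (h : WFMono K t)
    (hresp : Respects K₁ S K) : WFMono K₁ (applyMono S t) := by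
  intro b hb
  obtain ⟨a, ha, hab⟩ := memFTV_applyMono S b _ hb t rfl
  obtain ⟨k, hk⟩ := Option.isSome_iff_exists.1 (h a ha)
  exact (hresp.2 a k hk).wf b hab

/-- If `K ⊩ τ :: k` (the monotype `τ` has kind `k` under the kinding
environment `K`) and the kinded substitution `(K₁, S)` respects `K`, then
`K₁ ⊩ S(τ) :: S(k)`. -/
theorem hasKind_subst_of_respects
    (K K₁ : KEnv) (S : Subst) (τ : MonoTy) (k : Kind)
    (h : HasKind K τ k)
    (hresp : Respects K₁ S K) :
    HasKind K₁ (applyMono S τ) (applyKind S k) := by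
  cases h with
  | univ h => exact .univ (h.subst hresp)
  | tvar h hs =>
    rw [applyMono]
    exact (hresp.2 _ _ h).weaken fun p hp => List.map_subset _ hs hp
  | record h hs =>
    have hw := h.subst hresp
    rw [applyMono_record] at hw ⊢
    exact .record hw fun p hp => List.map_subset _ hs hp
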